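/- Let −1/2 ≤ α ≤ 0 and, for z₀ ∈ (−1,1), define b(z₀) = z₀(2+α−αz₀²)/(1+α+z₀²−αz₀²). Then b is strictly increasing on (−1,1) (indeed b'(z₀) > 0 for all z₀ ∈ (−1,1)), and −1 < b(z₀) < 1 for all z₀ ∈ (−1,1). -/

import Mathlib

/-- For `−1/2 ≤ α ≤ 0`, the function `b(z₀) = z₀(2+α−αz₀²)/(1+α+z₀²−αz₀²)` has positive
derivative on `(−1,1)`, is strictly increasing there, and maps `(−1,1)` into `(−1,1)`. -/
theorem b_strict_mono (α : ℝ) (hα₁ : -(1/2) ≤ α) (hα₂ : α ≤ 0)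
    (b : ℝ → ℝ)
    (hb : b = fun z₀ => z₀ * (2 + α - α * z₀ ^ 2) / (1 + α + z₀ ^ 2 - α * z₀ ^ 2)) :
    (∀ z₀ ∈ Set.Ioo (-1 : ℝ) 1, 0 < deriv b z₀) ∧
    StrictMonoOn b (Set.Ioo (-1 : ℝ) 1) ∧
    (∀ z₀ ∈ Set.Ioo (-1 : ℝ) 1, -1 < b z₀ ∧ b z₀ < 1) := by
  have hz : ∀ z ∈ Set.Ioo (-1 : ℝ) 1, 0 < 1 - z ^ 2 := by
    rintro z ⟨h1, h2⟩
    nlinarith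
  have hD : ∀ z : ℝ, 0 < 1 + α + z ^ 2 - α * z ^ 2 := by
    intro z
    have : 0 ≤ (1 - α) * z ^ 2 := mul_nonneg (by linarith) (sq_nonneg z)
    linarith
  have hderiv : ∀ z ∈ Set.Ioo (-1 : ℝ) 1, 0 < deriv b z := by
    intro z hzm
    have hN : HasDerivAt (fun z : ℝ => z * (2 + α - α * z ^ 2)) (2 + α - 3 * α * z ^ 2) z := by
      have h := (hasDerivAt_id' z).mul ((((hasDerivAt_id' z).pow 2).const_mul α).const_sub (2 + α))
      refine h.congr_deriv ?_
      simp
      ring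
    have hD' : HasDerivAt (fun z : ℝ => 1 + α + z ^ 2 - α * z ^ 2) (2 * (1 - α) * z) z := by
      have h := (((hasDerivAt_id' z).pow 2).const_add (1 + α)).sub
        (((hasDerivAt_id' z).pow 2).const_mul α)
      refine h.congr_deriv ?_
      simp
      ring
    have h := hN.fun_div hD' (hD z).ne'
    rw [← hb] at h
    rw [h.deriv]
    refine div_pos ?_ (pow_pos (hD z) 2)
    have key : 0 < (1 - z ^ 2) *
        ((2 + α) * (1 + α) * (1 - z ^ 2) + (2 + 4 * α) * z ^ 2) := by
      refine mul_pos (hz z hzm) (add_pos_of_pos_of_nonneg ?_ ?_)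
      · exact mul_pos (mul_pos (by linarith) (by linarith)) (hz z hzm)
      · exact mul_nonneg (by linarith) (sq_nonneg z)
    linarith [key]
  refine ⟨hderiv, ?_, ?_⟩
  · refine strictMonoOn_of_deriv_pos (convex_Ioo _ _) ?_ ?_
    · intro z hzm
      exact (differentiableAt_of_deriv_ne_zero (hderiv z hzm).ne').continuousAt.continuousWithinAt
    · rw [interior_Ioo]
      exact hderiv
  · rintro z ⟨h1, h2⟩
    rw [hb]
    constructor
    · rw [lt_div_iff₀ (hD z)]
      have : 0 < (1 + z) ^ 2 * (1 + α - α * z) :=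
        mul_pos (pow_pos (by linarith) 2) (by nlinarith)
      linarith
    · rw [div_lt_one (hD z)]
      have : 0 < (1 - z) ^ 2 * (1 + α + α * z) :=
        mul_pos (pow_pos (by linarith) 2) (by nlinarith)
      linarith
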